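/- Let M' be a matching on X' and let j ∈ {1, …, n+1} be an index such that no arc of the form (σ ∪ {w_j} → σ) with σ ∈ X belongs to M'. Define M = { (σ → τ) : σ, τ ∈ X and (σ ∪ {w_j} → τ ∪ {w_j}) ∈ M' }. Then M is a matching on X: M is a set of arcs of the Hasse diagram H(X) and every simplex of X belongs to at most one arc of M. -/

import Mathlib

open Finset

/-- A (finite) simplicial complex: a finite collection of nonempty finite sets
    of vertices, closed under taking nonempty subsets. -/
def IsComplex {U : Type*} [DecidableEq U] (X : Finset (Finset U)) : Prop :=
  (∀ σ ∈ X, σ ≠ ∅) ∧ ∀ σ ∈ X, ∀ τ : Finset U, τ ⊆ σ → τ ≠ ∅ → τ ∈ X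

/-- Arc of the Hasse diagram `H(X)`: from `σ` to `τ` iff `τ ⊂ σ` and
    `dim σ = dim τ + 1` (i.e. `|σ| = |τ| + 1`). -/
def HasseArc {U : Type*} [DecidableEq U] (X : Finset (Finset U)) (σ τ : Finset U) : Prop :=
  σ ∈ X ∧ τ ∈ X ∧ τ ⊂ σ ∧ σ.card = τ.card + 1

/-- A matching on `X`: a set of arcs of `H(X)` such that every simplex of `X`
    belongs to at most one arc. -/
def IsMatching {U : Type*} [DecidableEq U] (X : Finset (Finset U))
    (M : Set (Finset U × Finset U)) : Prop :=
  (∀ p ∈ M, HasseArc X p.1 p.2) ∧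
  ∀ p ∈ M, ∀ q ∈ M, p ≠ q → p.1 ≠ q.1 ∧ p.1 ≠ q.2 ∧ p.2 ≠ q.1 ∧ p.2 ≠ q.2

/-- Arc of the modified Hasse diagram `H(X)^M`, obtained from `H(X)` by
    reversing the direction of each arc in `M`. -/
def ModArc {U : Type*} [DecidableEq U] (X : Finset (Finset U))
    (M : Set (Finset U × Finset U)) (a b : Finset U) : Prop :=
  (HasseArc X a b ∧ (a, b) ∉ M) ∨ (b, a) ∈ M

/-- An acyclic matching: a matching such that `H(X)^M` has no directed cycle. -/
def IsAcyclicMatching {U : Type*} [DecidableEq U] (X : Finset (Finset U))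
    (M : Set (Finset U × Finset U)) : Prop :=
  IsMatching X M ∧ ∀ a : Finset U, ¬ Relation.TransGen (ModArc X M) a a

/-- `σ` is a critical simplex of the matching `M` on `X`: it belongs to no arc of `M`. -/
def IsCritical {U : Type*} [DecidableEq U] (X : Finset (Finset U))
    (M : Set (Finset U × Finset U)) (σ : Finset U) : Prop :=
  σ ∈ X ∧ ∀ p ∈ M, p.1 ≠ σ ∧ p.2 ≠ σ

/-- `X` has dimension exactly `d` (the dimension of a simplex `σ` is `|σ| - 1`). -/
def HasDim {U : Type*} [DecidableEq U] (X : Finset (Finset U)) (d : ℕ) : Prop :=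
  (∀ σ ∈ X, σ.card ≤ d + 1) ∧ ∃ σ ∈ X, σ.card = d + 1

/-- The complex `X' = X ∪ { σ ∪ {wᵢ} : σ ∈ X ∪ {∅}, i = 1, …, n+1 }`, obtained
    from `X` by attaching `n+1` cones with apexes `w 0, …, w n`. -/
def coneCx {U : Type*} [DecidableEq U] (X : Finset (Finset U)) (n : ℕ)
    (w : Fin (n + 1) → U) : Finset (Finset U) :=
  X ∪ Finset.univ.biUnion (fun i : Fin (n + 1) =>
    (insert (∅ : Finset U) X).image (fun σ => insert (w i) σ))

/-- The matching `M = { (σ → τ) : σ, τ ∈ X and (σ ∪ {w_j} → τ ∪ {w_j}) ∈ M' }`. -/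
def pullMatch {U : Type*} [DecidableEq U] (X : Finset (Finset U))
    (M' : Set (Finset U × Finset U)) (wj : U) : Set (Finset U × Finset U) :=
  {p | p.1 ∈ X ∧ p.2 ∈ X ∧ (insert wj p.1, insert wj p.2) ∈ M'}

theorem HasseArc.of_insert {U : Type*} [DecidableEq U] {X Y : Finset (Finset U)} {v : U}
    {σ τ : Finset U} (hσ : σ ∈ X) (hτ : τ ∈ X) (hvσ : v ∉ σ) (hvτ : v ∉ τ)
    (h : HasseArc Y (insert v σ) (insert v τ)) : HasseArc X σ τ := by
  obtain ⟨-, -, hsub, hcard⟩ := h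
  rw [card_insert_of_notMem hvσ, card_insert_of_notMem hvτ, Nat.add_right_cancel_iff] at hcard
  have hτσ : τ ⊂ σ :=
    ⟨(insert_subset_insert_iff hvτ).mp hsub.1, fun hστ ↦ hsub.2 (insert_subset_insert v hστ)⟩
  exact ⟨hσ, hτ, hτσ, hcard⟩

theorem IsMatching.pullback {U W : Type*} [DecidableEq U] [DecidableEq W]
    {X : Finset (Finset U)} {Y : Finset (Finset W)} {M : Set (Finset W × Finset W)}
    {f : Finset U → Finset W} (hM : IsMatching Y M) (hf : Set.InjOn f X)
    (harc : ∀ σ ∈ X, ∀ τ ∈ X, HasseArc Y (f σ) (f τ) → HasseArc X σ τ) :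
    IsMatching X {p | p.1 ∈ X ∧ p.2 ∈ X ∧ (f p.1, f p.2) ∈ M} := by
  obtain ⟨hM_arc, hM_disjoint⟩ := hM
  refine ⟨fun p ⟨hp₁, hp₂, hp⟩ ↦ harc _ hp₁ _ hp₂ (hM_arc _ hp), ?_⟩
  rintro p ⟨hp₁, hp₂, hp⟩ q ⟨hq₁, hq₂, hq⟩ hpq
  have himage : (f p.1, f p.2) ≠ (f q.1, f q.2) := fun h ↦
    hpq (Prod.ext (hf hp₁ hq₁ (congrArg Prod.fst h)) (hf hp₂ hq₂ (congrArg Prod.snd h)))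
  obtain ⟨h₁₁, h₁₂, h₂₁, h₂₂⟩ := hM_disjoint _ hp _ hq himage
  exact ⟨ne_of_apply_ne f h₁₁, ne_of_apply_ne f h₁₂, ne_of_apply_ne f h₂₁, ne_of_apply_ne f h₂₂⟩

theorem pullMatch_isMatching_general {U : Type*} [DecidableEq U] {X Y : Finset (Finset U)}
    {M : Set (Finset U × Finset U)} {v : U} (hv : ∀ σ ∈ X, v ∉ σ) (hM : IsMatching Y M) :
    IsMatching X (pullMatch X M v) :=
  have hinj : Set.InjOn (insert v) (X : Set (Finset U)) := insert_erase_invOn.2.injOn.mono hv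
  hM.pullback hinj fun σ hσ τ hτ ↦ HasseArc.of_insert hσ hτ (hv σ hσ) (hv τ hτ)

/-- `M` is a matching on `X`. -/
theorem pullMatch_isMatching {U : Type*} [DecidableEq U] (d n : ℕ)
    (X : Finset (Finset U)) (hX : IsComplex X) (hd : HasDim X d)
    (hn : X.card = n) (hn1 : 1 ≤ n)
    (w : Fin (n + 1) → U) (hw : Function.Injective w)
    (hwX : ∀ i : Fin (n + 1), ∀ σ ∈ X, w i ∉ σ)
    (M' : Set (Finset U × Finset U)) (hM' : IsMatching (coneCx X n w) M')
    (j : Fin (n + 1)) (hj : ∀ σ ∈ X, (insert (w j) σ, σ) ∉ M') :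
    IsMatching X (pullMatch X M' (w j)) :=
  pullMatch_isMatching_general (hwX j) hM'
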